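/- For any integer k ≥ 1, γ̄(ℤ, {1, -3k}) = (k+1)/(3k+2). -/

import Mathlib

open Filter

open scoped Classical in
noncomputable def lowerDensity (U : Set ℤ) : ℝ :=
  Filter.liminf (fun n : ℕ =>
    (((Finset.Icc (-(n:ℤ)) (n:ℤ)).filter (fun m => m ∈ U)).card : ℝ) / (2*(n:ℝ)+1))
    Filter.atTop

/-- `D` is a dominating set of the Cayley digraph `Γ(ℤ, S)`. -/
def IsDominating (S D : Set ℤ) : Prop :=
  ∀ v : ℤ, v ∈ D ∨ ∃ u ∈ D, ∃ s ∈ S, v = u + s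

/-- The domination ratio of `Γ(ℤ, S)`. -/
noncomputable def domRatio (S : Set ℤ) : ℝ :=
  sInf {x : ℝ | ∃ D : Set ℤ, IsDominating S D ∧ x = lowerDensity D}

/-!
Let `D` dominate `ℤ` with respect to `{1, -n}`. Counting the elements of `D` in all triples
`{v, v + 1, v + 2}` shows that, up to bounded errors, `3 |D| + #(empty triples)` equals the number
of triples plus the number of adjacent pairs plus the number of *close starts*, i.e. elements of
`D` followed by another one within distance two. An empty triple at `v` forces the adjacent pair
`v + n + 1, v + n + 2`, so empty triples can be traded for adjacent pairs, and `3 |D|` is at least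
the number of triples plus the number of close starts.

For `n = 3k` close starts have density at least `1 / (3k + 2)`. If `d ∈ D` is not a close start,
then `d + 3k + 2 ∈ D`; if moreover there is no close start in between, then, `3k + 2` being `2`
modulo `3`, the exact count gives two empty triples, hence two close starts in the next block. The
bound `(1 + 1 / (3k + 2)) / 3 = (k + 1) / (3k + 2)` is attained by the integers whose residue
modulo `3k + 2` is one of `0, 3, …, 3k`.
-/

section WindowCount

open scoped Classical in
/-- The number of elements of `A` in the window `a, a + 1, …, a + m - 1`. The window is indexed by
naturals, so that the theory of `Nat.count` applies. -/
noncomputable def windowCount (A : Set ℤ) (a : ℤ) (m : ℕ) : ℕ :=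
  Nat.count (fun i : ℕ => a + i ∈ A) m

variable {A B : Set ℤ} {a b : ℤ} {m : ℕ}

@[simp]
lemma windowCount_zero (A : Set ℤ) (a : ℤ) : windowCount A a 0 = 0 := by
  classical exact Nat.count_zero _

open scoped Classical in
lemma windowCount_succ (A : Set ℤ) (a : ℤ) (m : ℕ) :
    windowCount A a (m + 1) = windowCount A a m + if a + m ∈ A then 1 else 0 :=
  Nat.count_succ _ m

lemma windowCount_add (A : Set ℤ) (a : ℤ) (m l : ℕ) :
    windowCount A a (m + l) = windowCount A a m + windowCount A (a + m) l := by
  simp only [windowCount, Nat.count_add]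
  congr! 3
  rw [Nat.cast_add, add_assoc]

open scoped Classical in
lemma windowCount_succ' (A : Set ℤ) (a : ℤ) (m : ℕ) :
    windowCount A a (m + 1) = (if a ∈ A then 1 else 0) + windowCount A (a + 1) m := by
  rw [add_comm m 1, windowCount_add, windowCount_succ]
  simp

lemma windowCount_le_length (A : Set ℤ) (a : ℤ) (m : ℕ) : windowCount A a m ≤ m := by
  classical exact Nat.count_le _

lemma windowCount_le_windowCount (h : ∀ i < m, a + (i : ℤ) ∈ A → b + (i : ℤ) ∈ B) :
    windowCount A a m ≤ windowCount B b m := by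
  classical exact Nat.count_mono_left h

lemma windowCount_eq_zero_iff : windowCount A a m = 0 ↔ ∀ i < m, a + (i : ℤ) ∉ A := by
  classical exact Nat.count_iff_forall_not

lemma windowCount_pos_iff : 0 < windowCount A a m ↔ ∃ i < m, a + (i : ℤ) ∈ A := by
  classical exact Nat.pos_iff_ne_zero.trans Nat.count_ne_iff_exists

lemma one_lt_windowCount_iff :
    1 < windowCount A a m ↔
      ∃ i j : ℕ, i < j ∧ j < m ∧ a + (i : ℤ) ∈ A ∧ a + (j : ℤ) ∈ A := by
  simp only [windowCount, Nat.count_eq_card_filter_range, Finset.one_lt_card_iff,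
    Finset.mem_filter, Finset.mem_range]
  constructor
  · rintro ⟨i, j, ⟨hi, hiA⟩, ⟨hj, hjA⟩, hij⟩
    rcases hij.lt_or_gt with hlt | hgt
    · exact ⟨i, j, hlt, hj, hiA, hjA⟩
    · exact ⟨j, i, hgt, hi, hjA, hiA⟩
  · rintro ⟨i, j, hij, hj, hiA, hjA⟩
    exact ⟨i, j, ⟨hij.trans hj, hiA⟩, ⟨hj, hjA⟩, hij.ne⟩

lemma windowCount_translate_le (A : Set ℤ) (a : ℤ) (t m : ℕ) :
    windowCount A (a + t) m ≤ windowCount A a m + t := by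
  have hsplit : windowCount A a t + windowCount A (a + t) m =
      windowCount A a m + windowCount A (a + m) t := by
    rw [← windowCount_add, ← windowCount_add, add_comm]
  have hle := windowCount_le_length A (a + m) t
  omega

end WindowCount

section LowerDensity

variable {A : Set ℤ} {ρ C : ℝ}

open scoped Classical in
lemma card_filter_Icc_eq_windowCount (A : Set ℤ) (n : ℕ) :
    ((Finset.Icc (-(n : ℤ)) n).filter (· ∈ A)).card = windowCount A (-n) (2 * n + 1) := by
  rw [windowCount, Nat.count_eq_card_filter_range]
  refine Finset.card_nbij' (fun v => (v + n).toNat) (fun i => -(n : ℤ) + i) ?_ ?_ ?_ ?_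
  · intro v hv
    simp only [Finset.coe_filter, Finset.mem_Icc, Set.mem_ofPred_eq, Finset.mem_range] at hv ⊢
    refine ⟨by omega, ?_⟩
    rw [Int.toNat_of_nonneg (by omega), neg_add_cancel_comm_assoc]
    exact hv.2
  · intro i hi
    simp only [Finset.coe_filter, Finset.mem_Icc, Set.mem_ofPred_eq, Finset.mem_range] at hi ⊢
    exact ⟨by omega, hi.2⟩
  · intro v hv
    simp only [Finset.coe_filter, Finset.mem_Icc, Set.mem_ofPred_eq] at hv
    dsimp only
    omega
  · intro i _
    dsimp only
    omega

lemma lowerDensity_eq_liminf_windowCount (A : Set ℤ) :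
    lowerDensity A =
      liminf (fun n : ℕ => (windowCount A (-n) (2 * n + 1) : ℝ) / (2 * n + 1)) atTop := by
  simp only [lowerDensity, card_filter_Icc_eq_windowCount]

lemma windowCount_div_le_one (A : Set ℤ) (n : ℕ) :
    (windowCount A (-n) (2 * n + 1) : ℝ) / (2 * n + 1) ≤ 1 :=
  div_le_one_of_le₀ (mod_cast windowCount_le_length A (-n) (2 * n + 1)) (by positivity)

lemma tendsto_add_div_two_mul_add_one (ρ C : ℝ) :
    Tendsto (fun n : ℕ => ρ + C / (2 * (n : ℝ) + 1)) atTop (nhds ρ) := by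
  have hlength : Tendsto (fun n : ℕ => 2 * (n : ℝ) + 1) atTop atTop :=
    tendsto_atTop_add_const_right _ _ (tendsto_natCast_atTop_atTop.const_mul_atTop two_pos)
  simpa using (hlength.const_div_atTop C).const_add ρ

lemma le_lowerDensity
    (h : ∀ n : ℕ, ρ * (2 * n + 1) ≤ windowCount A (-n) (2 * n + 1) + C) :
    ρ ≤ lowerDensity A := by
  have hlim := tendsto_add_div_two_mul_add_one ρ (-C)
  rw [lowerDensity_eq_liminf_windowCount, ← hlim.liminf_eq]
  refine liminf_le_liminf (.of_forall fun n => ?_) hlim.isBoundedUnder_ge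
    (isBoundedUnder_of ⟨1, windowCount_div_le_one A⟩).isCoboundedUnder_ge
  rw [le_div_iff₀ (by positivity), add_mul, div_mul_cancel₀ _ (by positivity)]
  linarith [h n]

lemma lowerDensity_le
    (h : ∀ n : ℕ, (windowCount A (-n) (2 * n + 1) : ℝ) ≤ ρ * (2 * n + 1) + C) :
    lowerDensity A ≤ ρ := by
  have hlim := tendsto_add_div_two_mul_add_one ρ C
  rw [lowerDensity_eq_liminf_windowCount, ← hlim.liminf_eq]
  refine liminf_le_liminf (.of_forall fun n => ?_)
    (isBoundedUnder_of ⟨0, fun n => by positivity⟩) hlim.isBoundedUnder_le.isCoboundedUnder_ge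
  rw [div_le_iff₀ (by positivity), add_mul, div_mul_cancel₀ _ (by positivity)]
  exact h n

end LowerDensity

section Triples

/-- The integers `v` such that `v` and `v + 1` both lie in `D`. -/
def adjacentStarts (D : Set ℤ) : Set ℤ := {v | v ∈ D ∧ v + 1 ∈ D}

/-- The elements of `D` that are followed by another element of `D` within distance two. -/
def closeStarts (D : Set ℤ) : Set ℤ := {v | v ∈ D ∧ (v + 1 ∈ D ∨ v + 2 ∈ D)}

/-- The integers `v` such that the triple `v, v + 1, v + 2` does not meet `D`. -/
def emptyTripleStarts (D : Set ℤ) : Set ℤ := {v | v ∉ D ∧ v + 1 ∉ D ∧ v + 2 ∉ D}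

variable {D : Set ℤ}

lemma adjacentStarts_subset_closeStarts : adjacentStarts D ⊆ closeStarts D :=
  fun _ hv => ⟨hv.1, .inl hv.2⟩

lemma windowCount_triples (D : Set ℤ) (a : ℤ) (m : ℕ) :
    windowCount D a m + windowCount D (a + 1) m + windowCount D (a + 2) m +
        windowCount (emptyTripleStarts D) a m =
      m + windowCount (adjacentStarts D) (a + 1) m + windowCount (closeStarts D) a m := by
  classical
  induction m with
  | zero => simp
  | succ m ih =>
    have hpoint (v : ℤ) :
        (if v ∈ D then 1 else 0) + (if v + 1 ∈ D then 1 else 0) + (if v + 2 ∈ D then 1 else 0) +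
            (if v ∈ emptyTripleStarts D then 1 else 0) =
          1 + (if v + 1 ∈ adjacentStarts D then 1 else 0) +
            (if v ∈ closeStarts D then 1 else 0) := by
      simp only [emptyTripleStarts, adjacentStarts, closeStarts, Set.mem_ofPred_eq, add_assoc,
        one_add_one_eq_two]
      by_cases h₀ : v ∈ D <;> by_cases h₁ : v + 1 ∈ D <;> by_cases h₂ : v + 2 ∈ D <;>
        simp [h₀, h₁, h₂]
    have hlast := hpoint (a + m)
    simp only [windowCount_succ, add_right_comm a _ (m : ℤ)]
    omega

lemma windowCount_emptyTripleStarts_add_three_mul {d : ℤ} {m : ℕ} (hd : d ∈ D)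
    (hend : d + m + 2 ∈ D) (hclose : windowCount (closeStarts D) d (m + 2) = 0) :
    windowCount (emptyTripleStarts D) d m + 3 * windowCount D d m = m + 2 := by
  have hnot := windowCount_eq_zero_iff.1 hclose
  have hdc : d ∉ closeStarts D := by simpa using hnot 0 (by omega)
  have hd₁ : d + 1 ∉ D := fun h => hdc ⟨hd, .inl h⟩
  have hm : d + m ∉ D := fun h => hnot m (by omega) ⟨h, .inr hend⟩
  have hm₁ : d + 1 + m ∉ D := fun h => hnot (m + 1) (by omega) (by
    push_cast
    exact ⟨by convert h using 1; ring, .inl (by convert hend using 1; ring)⟩)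
  have hshift₁ := (windowCount_succ D d m).symm.trans (windowCount_succ' D d m)
  have hshift₂ := (windowCount_succ D (d + 1) m).symm.trans (windowCount_succ' D (d + 1) m)
  rw [if_neg hm, if_pos hd] at hshift₁
  rw [if_neg hm₁, if_neg hd₁, add_assoc d, one_add_one_eq_two] at hshift₂
  have hclose₀ : windowCount (closeStarts D) d m = 0 :=
    windowCount_eq_zero_iff.2 fun i hi => hnot i (by omega)
  have hadj₀ : windowCount (adjacentStarts D) (d + 1) m = 0 :=
    windowCount_eq_zero_iff.2 fun i hi h => hnot (i + 1) (by omega) (by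
      convert adjacentStarts_subset_closeStarts h using 1; push_cast; ring)
  have htriples := windowCount_triples D d m
  omega

lemma exists_mem_after_closeStarts {d : ℤ} {i : ℕ} (h : d + i ∈ closeStarts D) :
    ∃ t : ℕ, i < t ∧ t ≤ i + 2 ∧ d + t ∈ D := by
  rcases h.2 with h₁ | h₂
  · exact ⟨i + 1, by omega, by omega, by simpa [add_assoc] using h₁⟩
  · exact ⟨i + 2, by omega, by omega, by simpa [add_assoc] using h₂⟩

end Triples

lemma isDominating_one_neg_iff {n : ℤ} {D : Set ℤ} :
    IsDominating {1, -n} D ↔ ∀ v, v ∈ D ∨ v - 1 ∈ D ∨ v + n ∈ D := by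
  simp only [IsDominating, Set.mem_insert_iff, Set.mem_singleton_iff, exists_eq_or_imp,
    exists_eq_left, and_or_left, exists_or, ← sub_eq_iff_eq_add, exists_eq_right', sub_neg_eq_add]

namespace IsDominating

section General

variable {n : ℕ} {D : Set ℤ}

lemma exists_mem_near (hD : IsDominating {1, -(n : ℤ)} D) (a : ℤ) :
    ∃ t ≤ n + 1, a + (t : ℤ) ∈ D := by
  rcases isDominating_one_neg_iff.1 hD (a + 1) with h | h | h
  · exact ⟨1, by omega, by simpa using h⟩
  · exact ⟨0, by omega, by simpa using h⟩
  · exact ⟨n + 1, le_rfl, by convert h using 1; push_cast; ring⟩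

lemma add_mem_adjacentStarts (hD : IsDominating {1, -(n : ℤ)} D) {v : ℤ}
    (hv : v ∈ emptyTripleStarts D) : v + (n + 1) ∈ adjacentStarts D := by
  obtain ⟨h₀, h₁, h₂⟩ := hv
  have hdom₁ := isDominating_one_neg_iff.1 hD (v + 1)
  have hdom₂ := isDominating_one_neg_iff.1 hD (v + 2)
  rw [show v + 1 - 1 = v by ring] at hdom₁
  rw [show v + 2 - 1 = v + 1 by ring] at hdom₂
  constructor
  · convert (hdom₁.resolve_left h₁).resolve_left h₀ using 1; ring
  · convert (hdom₂.resolve_left h₂).resolve_left h₁ using 1; ring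

lemma add_mem_of_notMem_closeStarts (hD : IsDominating {1, -(n : ℤ)} D) {d : ℤ} (hd : d ∈ D)
    (hclose : d ∉ closeStarts D) : d + n + 2 ∈ D := by
  have hnear : ¬(d + 1 ∈ D ∨ d + 2 ∈ D) := fun h => hclose ⟨hd, h⟩
  have hdom := isDominating_one_neg_iff.1 hD (d + 2)
  rw [show d + 2 - 1 = d + 1 by ring, show d + 2 + (n : ℤ) = d + n + 2 by ring] at hdom
  tauto

lemma windowCount_closeStarts_add_le (hD : IsDominating {1, -(n : ℤ)} D) (a : ℤ) (m : ℕ) :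
    m + windowCount (closeStarts D) a m ≤ 3 * windowCount D a m + (n + 3) := by
  have hempty : windowCount (emptyTripleStarts D) a m ≤
      windowCount (adjacentStarts D) (a + 1 + n) m :=
    windowCount_le_windowCount fun i _ hi => by
      convert hD.add_mem_adjacentStarts hi using 1; ring
  have hadj := windowCount_translate_le (adjacentStarts D) (a + 1) n m
  have hD₁ : windowCount D (a + 1) m ≤ windowCount D a m + 1 :=
    mod_cast windowCount_translate_le D a 1 m
  have hD₂ : windowCount D (a + 2) m ≤ windowCount D a m + 2 :=
    mod_cast windowCount_translate_le D a 2 m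
  have htriples := windowCount_triples D a m
  omega

end General

section Multiple

variable {k : ℕ} {D : Set ℤ}

lemma one_lt_windowCount_closeStarts (hD : IsDominating {1, -((3 * k : ℕ) : ℤ)} D) {d : ℤ}
    (hd : d ∈ D) (hclose : windowCount (closeStarts D) d (3 * k + 2) = 0) :
    1 < windowCount (closeStarts D) d (6 * k + 1) := by
  have hdc : d ∉ closeStarts D := by
    simpa using windowCount_eq_zero_iff.1 hclose 0 (by omega)
  have hcount := windowCount_emptyTripleStarts_add_three_mul hd
    (hD.add_mem_of_notMem_closeStarts hd hdc) hclose
  obtain ⟨i, j, hij, hj, hi, hj'⟩ := one_lt_windowCount_iff.1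
    (show 1 < windowCount (emptyTripleStarts D) d (3 * k) by omega)
  have hstart {l : ℕ} (hl : d + l ∈ emptyTripleStarts D) :
      d + ((l + (3 * k + 1) : ℕ) : ℤ) ∈ closeStarts D := by
    convert adjacentStarts_subset_closeStarts (hD.add_mem_adjacentStarts hl) using 1
    push_cast
    ring
  exact one_lt_windowCount_iff.2 ⟨_, _, by omega, by omega, hstart hi, hstart hj'⟩

lemma exists_mem_le_mul_windowCount_closeStarts
    (hD : IsDominating {1, -((3 * k : ℕ) : ℤ)} D) {d : ℤ} (hd : d ∈ D) :
    ∃ t : ℕ, 0 < t ∧ t ≤ 2 * (3 * k + 2) ∧ d + t ∈ D ∧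
      t ≤ (3 * k + 2) * windowCount (closeStarts D) d t := by
  by_cases hdc : d ∈ closeStarts D
  · have hd₀ : d + (0 : ℕ) ∈ closeStarts D := by simpa using hdc
    obtain ⟨t, ht₀, ht₂, ht⟩ := exists_mem_after_closeStarts hd₀
    have hpos := windowCount_pos_iff.2 ⟨0, ht₀, hd₀⟩
    exact ⟨t, ht₀, by omega, ht, le_trans (by omega) (Nat.mul_le_mul_left _ hpos)⟩
  rcases Nat.eq_zero_or_pos (windowCount (closeStarts D) d (3 * k + 2)) with hzero | hpos
  · obtain ⟨i, j, hij, hj, hi, hj'⟩ :=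
      one_lt_windowCount_iff.1 (hD.one_lt_windowCount_closeStarts hd hzero)
    obtain ⟨t, hjt, htj, ht⟩ := exists_mem_after_closeStarts hj'
    have htwo := one_lt_windowCount_iff.2 ⟨i, j, hij, hjt, hi, hj'⟩
    exact ⟨t, by omega, by omega, ht, le_trans (by omega) (Nat.mul_le_mul_left _ htwo)⟩
  · refine ⟨3 * k + 2, by omega, by omega, ?_, Nat.le_mul_of_pos_right _ hpos⟩
    convert hD.add_mem_of_notMem_closeStarts hd hdc using 1
    push_cast
    ring

lemma le_mul_windowCount_closeStarts_add (hD : IsDominating {1, -((3 * k : ℕ) : ℤ)} D)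
    (m : ℕ) {d : ℤ} (hd : d ∈ D) :
    m ≤ (3 * k + 2) * windowCount (closeStarts D) d m + 2 * (3 * k + 2) := by
  induction m using Nat.strong_induction_on generalizing d with
  | _ m ih =>
    by_cases hm : m ≤ 2 * (3 * k + 2)
    · omega
    obtain ⟨t, htpos, htle, ht, hclose⟩ := hD.exists_mem_le_mul_windowCount_closeStarts hd
    obtain ⟨r, rfl⟩ : ∃ r, m = t + r := ⟨m - t, by omega⟩
    have hrest := ih r (by omega) ht
    rw [windowCount_add, mul_add]
    omega

lemma succ_mul_le_mul_windowCount_add (hD : IsDominating {1, -((3 * k : ℕ) : ℤ)} D)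
    (a : ℤ) (m : ℕ) :
    (k + 1) * m ≤ (3 * k + 2) * (windowCount D a m + (2 * k + 2)) := by
  obtain ⟨t, ht, hd⟩ := hD.exists_mem_near a
  have hclose := hD.le_mul_windowCount_closeStarts_add m hd
  have hshift := windowCount_translate_le (closeStarts D) a t m
  have htriples := hD.windowCount_closeStarts_add_le a m
  have hmul : (3 * k + 2) * (m + windowCount (closeStarts D) (a + t) m) ≤
      (3 * k + 2) * (3 * windowCount D a m + (6 * k + 4)) :=
    Nat.mul_le_mul_left _ (by omega)
  linarith

lemma div_le_lowerDensity (hD : IsDominating {1, -((3 * k : ℕ) : ℤ)} D) :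
    ((k : ℝ) + 1) / (3 * k + 2) ≤ lowerDensity D := by
  refine le_lowerDensity (C := 2 * k + 2) fun n => ?_
  rw [div_mul_eq_mul_div, div_le_iff₀' (by positivity)]
  exact_mod_cast hD.succ_mul_le_mul_windowCount_add (-n) (2 * n + 1)

end Multiple

end IsDominating

section RotationSet

/-- The integers `v` whose multiple `p * v` has residue less than `p` modulo `q`; for `0 ≤ p ≤ q`
and `0 < q` these are equidistributed with density `p / q`. For `p = k + 1` and `q = 3 * k + 2` they
are the integers with residue `0, 3, …, 3 * k` modulo `q`, since `3 * p = q + 1`. -/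
def rotationSet (p q : ℤ) : Set ℤ := {v | p * v % q < p}

variable {p q x : ℤ}

lemma sub_emod_of_lt (hpq : p ≤ q) (hq : 0 < q) (hx : x % q < p) :
    (x - p) % q = x % q - p + q := by
  have hnonneg := Int.emod_nonneg x hq.ne'
  rw [← Int.emod_sub_emod, ← Int.add_emod_right]
  exact Int.emod_eq_of_lt (by omega) (by omega)

lemma sub_emod_of_le (hp : 0 ≤ p) (hq : 0 < q) (hx : p ≤ x % q) :
    (x - p) % q = x % q - p := by
  have hlt := Int.emod_lt_of_pos x hq
  rw [← Int.emod_sub_emod]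
  exact Int.emod_eq_of_lt (by omega) (by omega)

lemma mul_windowCount_rotationSet_add_emod (hp : 0 ≤ p) (hpq : p ≤ q) (hq : 0 < q) (a : ℤ) (m : ℕ) :
    q * windowCount (rotationSet p q) a m + p * (a + m - 1) % q = p * m + p * (a - 1) % q := by
  induction m with
  | zero => simp
  | succ m ih =>
    rw [mul_sub_one] at ih
    rw [windowCount_succ, Nat.cast_succ, show a + ((m : ℤ) + 1) - 1 = a + m by ring]
    split_ifs with hmem
    · rw [sub_emod_of_lt hpq hq hmem] at ih
      push_cast
      linarith
    · rw [sub_emod_of_le hp hq (not_lt.1 hmem)] at ih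
      push_cast
      linarith

lemma mul_windowCount_rotationSet_le (hp : 0 ≤ p) (hpq : p ≤ q) (hq : 0 < q) (a : ℤ) (m : ℕ) :
    q * windowCount (rotationSet p q) a m ≤ p * m + q := by
  have hcount := mul_windowCount_rotationSet_add_emod hp hpq hq a m
  have hnonneg := Int.emod_nonneg (p * (a + m - 1)) hq.ne'
  have hlt := Int.emod_lt_of_pos (p * (a - 1)) hq
  omega

lemma lowerDensity_rotationSet_le (hp : 0 ≤ p) (hpq : p ≤ q) (hq : 0 < q) :
    lowerDensity (rotationSet p q) ≤ (p : ℝ) / q := by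
  have hq' : (0 : ℝ) < q := mod_cast hq
  refine lowerDensity_le (C := 1) fun n => ?_
  rw [div_mul_eq_mul_div, ← sub_le_iff_le_add, le_div_iff₀' hq', mul_sub, mul_one,
    sub_le_iff_le_add]
  exact_mod_cast mul_windowCount_rotationSet_le hp hpq hq (-n) (2 * n + 1)

lemma isDominating_rotationSet (hq : 0 < q) (hqp : q ≤ 3 * p) :
    IsDominating {1, -(q - 2)} (rotationSet p q) := by
  refine isDominating_one_neg_iff.2 fun v => ?_
  simp only [rotationSet, Set.mem_ofPred_eq]
  have hp : 0 ≤ p := by omega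
  have hlt := Int.emod_lt_of_pos (p * v) hq
  have hone : p * (v - 1) % q = (p * v - p) % q := by rw [mul_sub_one]
  have htwo : p * (v + (q - 2)) % q = (p * v - p - p) % q := by
    rw [show p * (v + (q - 2)) = p * v - p - p + p * q by ring, Int.add_mul_emod_self_right]
  rw [hone, htwo]
  rcases lt_or_ge (p * v % q) p with h₀ | h₀
  · exact .inl h₀
  have hsub₁ := sub_emod_of_le hp hq h₀
  rcases lt_or_ge ((p * v - p) % q) p with h₁ | h₁
  · exact .inr (.inl h₁)
  have hsub₂ := sub_emod_of_le hp hq h₁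
  exact .inr (.inr (by omega))

end RotationSet

theorem stmt_17 (k : ℤ) (hk : 1 ≤ k) :
    domRatio {1, -(3*k)} = ((k:ℝ) + 1) / (3*(k:ℝ) + 2) := by
  have hdom : IsDominating {1, -(3 * k)} (rotationSet (k + 1) (3 * k + 2)) := by
    simpa using isDominating_rotationSet (p := k + 1) (q := 3 * k + 2) (by omega) (by omega)
  have hupper : lowerDensity (rotationSet (k + 1) (3 * k + 2)) ≤
      ((k : ℝ) + 1) / (3 * (k : ℝ) + 2) := by
    simpa using lowerDensity_rotationSet_le (p := k + 1) (q := 3 * k + 2)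
      (by omega) (by omega) (by omega)
  have hlower {D : Set ℤ} (hD : IsDominating {1, -(3 * k)} D) :
      ((k : ℝ) + 1) / (3 * (k : ℝ) + 2) ≤ lowerDensity D := by
    lift k to ℕ using by omega
    rw [Int.cast_natCast]
    exact IsDominating.div_le_lowerDensity (mod_cast hD)
  refine IsLeast.csInf_eq ⟨⟨_, hdom, (hlower hdom).antisymm hupper⟩, ?_⟩
  rintro _ ⟨D, hD, rfl⟩
  exact hlower hD
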